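/- Let S be a finite archimedean commutative semigroup with kernel K (so K = e + S where e is the unique idempotent of S, and the Rees quotient S/K is a commutative nilsemigroup). If the nilsemigroup S/K has nilpotency index at most three, then E(S) ≤ D(S) + κ(S) − 1. -/

import Mathlib

namespace EGZ

variable {S : Type}

/-- `rep a n = (n+1)·a`, the (n+1)-fold sum of `a` with itself (defined for semigroups,
where the 0-fold sum is unavailable). -/
def rep [AddCommSemigroup S] (a : S) : ℕ → S
  | 0 => a
  | n + 1 => rep a n + a

/-- The sum of all terms of a sequence (= multiset) over the semigroup `S`, computed in
`WithZero S` (i.e. `S` with an extra identity element `0` adjoined); the empty sequence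
has sum `0`, and a nonempty sequence has sum `↑s` where `s ∈ S` is its genuine sum. -/
def mSum [AddCommSemigroup S] (T : Multiset S) : WithZero S :=
  (T.map (fun s => (s : WithZero S))).sum

/-- `σ(A) = σ(B)`, with the paper's convention: the empty sequence is regarded as having
sum equal to the identity element `e` of `S`, whenever `S` has an identity element. -/
def EqSum [AddCommSemigroup S] (A B : Multiset S) : Prop :=
  mSum A = mSum B ∨
    ∃ e : S, (∀ a : S, e + a = a) ∧
      ((mSum A = 0 ∧ mSum B = (e : WithZero S)) ∨
        (mSum A = (e : WithZero S) ∧ mSum B = 0))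

/-- A sequence `T` over `S` is reducible if some proper subsequence `B` of `T`
satisfies `σ(B) = σ(T)`. -/
def Reducible [AddCommSemigroup S] (T : Multiset S) : Prop :=
  ∃ B : Multiset S, B < T ∧ EqSum B T

/-- The (large) Davenport constant `D(S)`: the smallest `ℓ` such that every sequence over
`S` of length at least `ℓ` is reducible. -/
noncomputable def DavC (S : Type) [AddCommSemigroup S] : ℕ :=
  sInf {ℓ : ℕ | ∀ T : Multiset S, ℓ ≤ Multiset.card T → Reducible T}

/-- The property defining the small Davenport constant: `ℓ` is admissible if for every `m`
and every `c₁, …, c_m ∈ S` there is `J ⊆ [1, m]` with `|J| ≤ ℓ` and `Σ_{j=1}^m c_j = Σ_{j∈J} c_j`. -/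
def SmallDavProp (S : Type) [AddCommSemigroup S] (ℓ : ℕ) : Prop :=
  ∀ (m : ℕ) (c : Fin m → S), ∃ J : Finset (Fin m),
    J.card ≤ ℓ ∧ EqSum (J.val.map c) ((Finset.univ : Finset (Fin m)).val.map c)

/-- The small Davenport constant `d(S)`. -/
noncomputable def smallDavC (S : Type) [AddCommSemigroup S] : ℕ :=
  sInf {ℓ : ℕ | SmallDavProp S ℓ}

/-- The period of an element `a ∈ S`: the least `t > 0` such that `r·a = (r+t)·a`
for some `r > 0`. -/
noncomputable def period [AddCommSemigroup S] (a : S) : ℕ :=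
  sInf {t : ℕ | 0 < t ∧ ∃ k : ℕ, rep a (k + t) = rep a k}

/-- `exp(S)`: the least common multiple of the periods of all elements of `S`. -/
noncomputable def expS (S : Type) [AddCommSemigroup S] [Fintype S] : ℕ :=
  (Finset.univ : Finset S).lcm (fun a => period a)

/-- `κ(S) = ⌈|S| / exp(S)⌉ · exp(S)`. -/
noncomputable def kappa (S : Type) [AddCommSemigroup S] [Fintype S] : ℕ :=
  ((Fintype.card S + expS S - 1) / expS S) * expS S

/-- `E(S)`: the smallest positive integer `ℓ` such that every sequence `T` over `S` of
length at least `ℓ` contains a subsequence `T'` with `|T| - |T'| = κ(S)` and `σ(T') = σ(T)`. -/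
noncomputable def EC (S : Type) [AddCommSemigroup S] [Fintype S] : ℕ :=
  sInf {ℓ : ℕ | 0 < ℓ ∧ ∀ T : Multiset S, ℓ ≤ Multiset.card T →
    ∃ B : Multiset S, B ≤ T ∧ Multiset.card T - Multiset.card B = kappa S ∧ EqSum B T}

end EGZ

/-- A commutative semigroup `S` is archimedean: for any `a, b ∈ S` there exist
`m, n > 0` and `x, y ∈ S` with `m·a = b + x` and `n·b = a + y`
(here `EGZ.rep a m = (m+1)·a`, so `m` ranging over `ℕ` gives all positive multiples). -/
def IsArchimedean (S : Type) [AddCommSemigroup S] : Prop :=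
  ∀ a b : S, (∃ m : ℕ, ∃ x : S, EGZ.rep a m = b + x) ∧
    (∃ n : ℕ, ∃ y : S, EGZ.rep b n = a + y)

/-- The `t`-fold sumset `N + ⋯ + N` of a commutative semigroup `N`:
all sums of sequences of exactly `t` elements of `N`. -/
def tFold (N : Type) [AddCommSemigroup N] (t : ℕ) : Set N :=
  {s : N | ∃ T : Multiset N, Multiset.card T = t ∧ EGZ.mSum T = (s : WithZero N)}

/-- The nilpotency index `L(N)`: the least `t > 0` such that the `t`-fold sumset
`N + ⋯ + N` has exactly one element. -/
noncomputable def nilIndex (N : Type) [AddCommSemigroup N] : ℕ :=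
  sInf {t : ℕ | 0 < t ∧ ∃ a : N, tFold N t = {a}}

theorem aux_scherk {G : Type} [AddCommGroup G] [DecidableEq G] (n : ℕ) :
    ∀ A B : Finset G, B.card = n → (0:G) ∈ A → (0:G) ∈ B →
      (∀ a ∈ A, ∀ b ∈ B, a + b = 0 → a = 0 ∧ b = 0) →
      ∃ C : Finset G, A.card + B.card ≤ C.card + 1 ∧
        ∀ c ∈ C, ∃ a ∈ A, ∃ b ∈ B, a + b = c := by
  induction n using Nat.strong_induction_on with
  | _ n ih =>
  intro A B hBn hA hB hu
  by_cases hB1 : ∀ b ∈ B, b = 0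
  · have : B = {0} := by
      ext x; constructor
      · intro hx; simpa using hB1 x hx
      · intro hx; rw [Finset.mem_singleton] at hx; rwa [hx]
    subst this
    exact ⟨A, by simp, fun c hc => ⟨c, hc, 0, by simp, by simp⟩⟩
  · push Not at hB1
    obtain ⟨b, hb, hb0⟩ := hB1
    have hex : ∃ a ∈ A, a + b ∉ A := by
      by_contra hcon
      push Not at hcon
      have himg : A.image (· + b) = A := by
        apply Finset.eq_of_subset_of_card_le
        · intro x hx
          obtain ⟨a, ha, rfl⟩ := Finset.mem_image.1 hx
          exact hcon a ha
        · rw [Finset.card_image_of_injective _ (add_left_injective b)]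
      rw [← himg] at hA
      obtain ⟨a, ha, hab⟩ := Finset.mem_image.1 hA
      exact hb0 (hu a ha b hb hab).2
    obtain ⟨a, ha, hab⟩ := hex
    set A' := A ∪ B.image (a + ·) with hA'
    set B' := B.filter (fun y => a + y ∈ A) with hB'
    have hlt : B'.card < B.card := by
      apply Finset.card_lt_card
      refine ⟨Finset.filter_subset _ _, fun h => ?_⟩
      exact hab (Finset.mem_filter.1 (h hb)).2
    have hcard : A'.card + B'.card = A.card + B.card := by
      have h1 : (A ∩ B.image (a + ·)).card = B'.card := by
        have : A ∩ B.image (a + ·) = B'.image (a + ·) := by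
          ext x
          simp only [hB', Finset.mem_inter, Finset.mem_image, Finset.mem_filter]
          constructor
          · rintro ⟨hx, y, hy, rfl⟩; exact ⟨y, ⟨hy, hx⟩, rfl⟩
          · rintro ⟨y, ⟨hy, hx⟩, rfl⟩; exact ⟨hx, y, hy, rfl⟩
        rw [this, Finset.card_image_of_injective _ (add_right_injective a)]
      rw [← h1, hA', Finset.card_union_add_card_inter,
        Finset.card_image_of_injective _ (add_right_injective a)]
    obtain ⟨C, hC1, hC2⟩ := ih B'.card (hBn ▸ hlt) A' B' rfl (Finset.mem_union_left _ hA)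
      (Finset.mem_filter.2 ⟨hB, by simpa using ha⟩) (by
        intro x hx y hy hxy
        obtain ⟨hyB, hyA⟩ := Finset.mem_filter.1 hy
        rcases Finset.mem_union.1 hx with hx | hx
        · exact hu x hx y hyB hxy
        · obtain ⟨b1, hb1, rfl⟩ := Finset.mem_image.1 hx
          have := hu (a + y) hyA b1 hb1 (by rw [← hxy]; abel)
          have hb10 := this.2
          subst hb10
          exact hu _ (by simpa using ha) y hyB hxy)
    refine ⟨C, by omega, fun c hc => ?_⟩
    obtain ⟨x, hx, y, hy, rfl⟩ := hC2 c hc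
    obtain ⟨hyB, hyA⟩ := Finset.mem_filter.1 hy
    rcases Finset.mem_union.1 hx with hx | hx
    · exact ⟨x, hx, y, hyB, rfl⟩
    · obtain ⟨b1, hb1, rfl⟩ := Finset.mem_image.1 hx
      exact ⟨a + y, hyA, b1, hb1, by abel⟩

theorem aux_sums {G : Type} [AddCommGroup G] [DecidableEq G] (h : ℕ) :
    ∀ T : Multiset G, (∀ g, T.count g ≤ h) →
      (∀ U ≤ T, U ≠ 0 → U.card ≤ h → U.sum ≠ 0) →
      ∃ C : Finset G, T.card + 1 ≤ C.card ∧ ∀ c ∈ C, ∃ U ≤ T, U.card ≤ h ∧ U.sum = c := by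
  induction h with
  | zero =>
    intro T hT _
    have : T = 0 := by
      apply Multiset.eq_zero_of_forall_notMem
      intro a ha
      have := Multiset.count_pos.2 ha
      have := hT a
      omega
    subst this
    refine ⟨{0}, by simp, fun c hc => ⟨0, le_rfl, by simp, ?_⟩⟩
    rw [Finset.mem_singleton] at hc; simp [hc]
  | succ h ih =>
    intro T hT hz
    set A := T.toFinset with hA
    have hAle : A.val ≤ T := by
      rw [hA, Multiset.toFinset_val]; exact Multiset.dedup_le T
    set T' := T - A.val with hT'
    have hTT : T' + A.val = T := Multiset.sub_add_cancel hAle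
    have hT'le : T' ≤ T := by rw [← hTT]; exact Multiset.le_add_right _ _
    have hcons : ∀ U ≤ T', ∀ y ∈ A, y ::ₘ U ≤ T := by
      intro U hU y hy
      rw [← hTT, ← Multiset.singleton_add, add_comm]
      exact add_le_add hU (Multiset.singleton_le.2 hy)
    obtain ⟨C, hC1, hC2⟩ := ih T' (by
        intro g
        rw [hT', Multiset.count_sub]
        have := hT g
        by_cases hg : g ∈ T
        · have : Multiset.count g A.val = 1 := by
            apply Multiset.count_eq_one_of_mem A.nodup
            exact Multiset.mem_toFinset.2 hg
          omega
        · rw [Multiset.count_eq_zero_of_notMem hg]; omega)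
      (fun U hU h0 hc => hz U (hU.trans hT'le) h0 (by omega))
    have h0A : (0:G) ∉ A := by
      intro h0
      exact hz {0} (Multiset.singleton_le.2 (Multiset.mem_toFinset.1 h0)) (by simp) (by simp)
        (by simp)
    have hC0 : ∀ x ∈ insert 0 C, ∃ U ≤ T', U.card ≤ h ∧ U.sum = x := by
      intro x hx
      rcases Finset.mem_insert.1 hx with rfl | hx
      · exact ⟨0, Multiset.zero_le _, by simp, by simp⟩
      · exact hC2 x hx
    obtain ⟨E, hE1, hE2⟩ := aux_scherk _ (insert 0 C) (insert 0 A) rfl (by simp) (by simp) (by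
      intro x hx y hy hxy
      obtain ⟨U, hU, hUc, rfl⟩ := hC0 x hx
      rcases Finset.mem_insert.1 hy with rfl | hy
      · exact ⟨by simpa using hxy, rfl⟩
      · exfalso
        refine hz (y ::ₘ U) (hcons U hU y hy) (by simp) (by simp; omega) ?_
        rw [Multiset.sum_cons, add_comm]; exact hxy)
    refine ⟨E, ?_, ?_⟩
    · rw [Finset.card_insert_of_notMem h0A] at hE1
      have h1 : C.card ≤ (insert 0 C).card := Finset.card_le_card (Finset.subset_insert _ _)
      have h2 : T.card = T'.card + A.card := by rw [← hTT, Multiset.card_add]; rfl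
      omega
    · intro c hc
      obtain ⟨x, hx, y, hy, rfl⟩ := hE2 c hc
      obtain ⟨U, hU, hUc, rfl⟩ := hC0 x hx
      rcases Finset.mem_insert.1 hy with rfl | hy
      · exact ⟨U, hU.trans hT'le, by omega, by simp⟩
      · exact ⟨y ::ₘ U, hcons U hU y hy, by simp; omega, by rw [Multiset.sum_cons, add_comm]⟩

theorem aux_short {G : Type} [AddCommGroup G] [Fintype G] [DecidableEq G] (h : ℕ)
    (T : Multiset G) (hT : ∀ g, T.count g ≤ h) (hc : Fintype.card G ≤ T.card) :
    ∃ U ≤ T, U ≠ 0 ∧ U.card ≤ h ∧ U.sum = 0 := by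
  by_contra hcon
  push Not at hcon
  obtain ⟨C, hC, _⟩ := aux_sums h T hT hcon
  have := Finset.card_le_univ C
  omega

theorem aux_maxzs {G : Type} [AddCommGroup G] [DecidableEq G] (D : ℕ)
    (hD : ∀ T : Multiset G, D ≤ T.card → ∃ U ≤ T, U ≠ 0 ∧ U.sum = 0) (n : ℕ) :
    ∀ W : Multiset G, W.card = n → ∃ V ≤ W, V.sum = 0 ∧ W.card < V.card + D := by
  induction n using Nat.strong_induction_on with
  | _ n ih =>
  intro W hW
  by_cases hc : D ≤ W.card
  · obtain ⟨U, hU, hU0, hUs⟩ := hD W hc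
    have hpos : 0 < U.card := Multiset.card_pos.2 hU0
    have hWU : W - U + U = W := Multiset.sub_add_cancel hU
    have hcc : (W - U).card + U.card = W.card := by rw [← Multiset.card_add, hWU]
    obtain ⟨V, hV, hVs, hVc⟩ := ih (W - U).card (by omega) (W - U) rfl
    refine ⟨V + U, ?_, by simp [hVs, hUs], by rw [Multiset.card_add]; omega⟩
    rw [← hWU]; exact add_le_add hV le_rfl
  · exact ⟨0, Multiset.zero_le _, by simp, by simp; omega⟩

theorem aux_trim {G : Type} [AddCommGroup G] [Fintype G] [DecidableEq G] (h k : ℕ)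
    (hk : Fintype.card G ≤ k) (n : ℕ) :
    ∀ V : Multiset G, V.card = n → (∀ g, V.count g ≤ h) → V.sum = 0 → k ≤ V.card + h →
      ∃ V' ≤ V, V'.sum = 0 ∧ k ≤ V'.card + h ∧ V'.card ≤ k := by
  induction n using Nat.strong_induction_on with
  | _ n ih =>
  intro V hV hcnt hs hc
  by_cases hle : V.card ≤ k
  · exact ⟨V, le_rfl, hs, hc, hle⟩
  · obtain ⟨U, hU, hU0, hUc, hUs⟩ := aux_short h V hcnt (by omega)
    have hpos : 0 < U.card := Multiset.card_pos.2 hU0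
    have hVU : V - U + U = V := Multiset.sub_add_cancel hU
    have hcc : (V - U).card + U.card = V.card := by rw [← Multiset.card_add, hVU]
    have hle' : V - U ≤ V := Multiset.sub_le_self _ _
    obtain ⟨V', h1, h2⟩ := ih (V - U).card (by omega) (V - U) rfl
      (fun g => (Multiset.count_le_of_le g hle').trans (hcnt g))
      (by
        have : (V - U + U).sum = 0 := by rw [hVU, hs]
        simpa [hUs] using this) (by omega)
    exact ⟨V', h1.trans hle', h2⟩

theorem aux_gao0 {G : Type} [AddCommGroup G] [Fintype G] [DecidableEq G] (D k : ℕ)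
    (hk : Fintype.card G ≤ k)
    (hD : ∀ T : Multiset G, D ≤ T.card → ∃ U ≤ T, U ≠ 0 ∧ U.sum = 0)
    (T : Multiset G) (hT : D + k ≤ T.card + 1) (hmax : ∀ g, T.count g ≤ T.count 0) :
    ∃ U ≤ T, U.card = k ∧ U.sum = 0 := by
  set W := T.filter (fun x => ¬ (x = 0)) with hW
  have hsplit : Multiset.replicate (T.count 0) 0 + W = T := by
    rw [← Multiset.filter_eq' T 0, hW]; exact Multiset.filter_add_not _ _
  have hWT : W ≤ T := Multiset.filter_le _ _
  have hc : T.card = T.count 0 + W.card := by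
    conv_lhs => rw [← hsplit]
    simp
  obtain ⟨V, hV, hVs, hVc⟩ := aux_maxzs D hD _ W rfl
  obtain ⟨V', h1, h2, h3, h4⟩ := aux_trim (T.count 0) k hk _ V rfl
    (fun g => (Multiset.count_le_of_le g (hV.trans hWT)).trans (hmax g)) hVs (by omega)
  refine ⟨Multiset.replicate (k - V'.card) 0 + V', ?_, by simp; omega, by simp [h2]⟩
  rw [← hsplit]
  exact add_le_add (Multiset.replicate_le_replicate 0 |>.2 (by omega)) (h1.trans hV)

theorem aux_gao {G : Type} [AddCommGroup G] [Fintype G] [DecidableEq G] (D k : ℕ)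
    (hk : Fintype.card G ≤ k) (hexp : ∀ g : G, k • g = 0)
    (hD : ∀ T : Multiset G, D ≤ T.card → ∃ U ≤ T, U ≠ 0 ∧ U.sum = 0)
    (T : Multiset G) (hT : D + k ≤ T.card + 1) :
    ∃ U ≤ T, U.card = k ∧ U.sum = 0 := by
  obtain ⟨g0, -, hg0⟩ := Finset.exists_max_image (Finset.univ : Finset G) (fun g => T.count g)
    ⟨0, Finset.mem_univ _⟩
  have hinj : Function.Injective (fun x : G => x - g0) := sub_left_injective
  have hcount : ∀ g, (T.map (fun x => x - g0)).count g = T.count (g + g0) := by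
    intro g
    have := Multiset.count_map_eq_count' (fun x : G => x - g0) T hinj (g + g0)
    simpa using this
  obtain ⟨U, hU, hUc, hUs⟩ := aux_gao0 D k hk hD (T.map (fun x => x - g0)) (by simpa using hT)
    (by intro g; rw [hcount, hcount]; simpa using hg0 (g + g0) (Finset.mem_univ _))
  refine ⟨U.map (fun x => x + g0), ?_, by simpa using hUc, ?_⟩
  · have := Multiset.map_le_map (f := fun x : G => x + g0) hU
    simpa using this
  · rw [Multiset.sum_map_add]
    simp [hUs, hUc, hexp]

theorem aux_lift {α β : Type} (f : α → β) (U : Multiset β) :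
    ∀ T : Multiset α, U ≤ T.map f → ∃ V ≤ T, V.map f = U := by
  induction U using Multiset.induction_on with
  | empty => intro T _; exact ⟨0, Multiset.zero_le _, rfl⟩
  | cons a U ih =>
    intro T h
    obtain ⟨t, ht, rfl⟩ := Multiset.mem_map.1 (Multiset.mem_of_le h (Multiset.mem_cons_self a U))
    obtain ⟨T', rfl⟩ := Multiset.exists_cons_of_mem ht
    rw [Multiset.map_cons] at h
    obtain ⟨V, hV, rfl⟩ := ih T' ((Multiset.cons_le_cons_iff _).1 h)
    exact ⟨t ::ₘ V, (Multiset.cons_le_cons_iff _).2 hV, by simp⟩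

section aux
open EGZ

theorem aux_mSum_zero {S : Type} [AddCommSemigroup S] : mSum (0 : Multiset S) = 0 := by
  simp [mSum]

theorem aux_mSum_cons {S : Type} [AddCommSemigroup S] (a : S) (T : Multiset S) :
    mSum (a ::ₘ T) = (a : WithZero S) + mSum T := by
  simp [mSum]

theorem aux_mSum_add {S : Type} [AddCommSemigroup S] (A B : Multiset S) :
    mSum (A + B) = mSum A + mSum B := by
  simp [mSum]

theorem aux_mSum_ne {S : Type} [AddCommSemigroup S] (T : Multiset S) :
    T ≠ 0 → ∃ s : S, mSum T = (s : WithZero S) := by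
  induction T using Multiset.induction_on with
  | empty => intro h; exact absurd rfl h
  | cons a T ih =>
    intro _
    rw [aux_mSum_cons]
    by_cases hT : T = 0
    · subst hT; exact ⟨a, by rw [aux_mSum_zero, add_zero]⟩
    · obtain ⟨s, hs⟩ := ih hT
      exact ⟨a + s, by rw [hs, WithZero.coe_add]⟩

theorem aux_hom {S G : Type} [AddCommSemigroup S] [AddCommMonoid G] (ψ : S → G)
    (hψ : ∀ a b, ψ (a + b) = ψ a + ψ b) (T : Multiset S) :
    ∀ s : S, mSum T = (s : WithZero S) → ψ s = (T.map ψ).sum := by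
  induction T using Multiset.induction_on with
  | empty => intro s h; rw [aux_mSum_zero] at h; exact absurd h.symm WithZero.coe_ne_zero
  | cons a T ih =>
    intro s h
    rw [aux_mSum_cons] at h
    by_cases hT : T = 0
    · subst hT
      rw [aux_mSum_zero, add_zero] at h
      simp [WithZero.coe_inj.1 h]
    · obtain ⟨t, ht⟩ := aux_mSum_ne T hT
      rw [ht, ← WithZero.coe_add] at h
      rw [← WithZero.coe_inj.1 h, hψ, ih t ht]; simp

theorem aux_rep {S : Type} [AddCommSemigroup S] (a : S) (n : ℕ) :
    mSum (Multiset.replicate (n + 1) a) = ((rep a n : S) : WithZero S) := by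
  induction n with
  | zero => simp [mSum, rep]
  | succ n ih =>
    rw [Multiset.replicate_succ, aux_mSum_cons, ih, ← WithZero.coe_add, rep, add_comm]

theorem aux_rep_hom {S G : Type} [AddCommSemigroup S] [AddCommMonoid G] (ψ : S → G)
    (hψ : ∀ a b, ψ (a + b) = ψ a + ψ b) (a : S) (n : ℕ) : ψ (rep a n) = (n + 1) • ψ a := by
  have := aux_hom ψ hψ _ _ (aux_rep a n)
  rwa [Multiset.map_replicate, Multiset.sum_replicate] at this

theorem aux_pigeon {S : Type} [AddCommSemigroup S] [Fintype S] (T : Multiset S)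
    (hT : Fintype.card S + 1 ≤ T.card) :
    ∃ A C : Multiset S, A ≠ 0 ∧ C ≠ 0 ∧ A + C = T ∧ mSum A = mSum T := by
  classical
  obtain ⟨l, rfl⟩ := Quot.exists_rep T
  change Fintype.card S + 1 ≤ l.length at hT
  have hne : ∀ i : Fin (Fintype.card S + 1), ((l.take (i + 1) : List S) : Multiset S) ≠ 0 := by
    intro i h
    have h2 := congrArg Multiset.card h
    rw [Multiset.coe_card, List.length_take, Multiset.card_zero] at h2
    omega
  choose f hf using fun i => aux_mSum_ne _ (hne i)
  obtain ⟨i, j, hij, hfij⟩ := Fintype.exists_ne_map_eq_of_card_lt f (by simp)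
  wlog hlt : i < j generalizing i j
  · exact this j i hij.symm hfij.symm (lt_of_le_of_ne (not_lt.1 hlt) hij.symm)
  have hlt' : (i : ℕ) < j := hlt
  have hj := j.2
  set P := l.take (i + 1)
  set R := l.drop (j + 1)
  set M := (l.take (j + 1)).drop (i + 1)
  have hPM : P ++ M = l.take (j + 1) := by
    have := List.take_append_drop (i + 1 : ℕ) (l.take (j + 1))
    rw [List.take_take, min_eq_left (by omega)] at this
    exact this
  have hl : l = P ++ M ++ R := by rw [hPM, List.take_append_drop]
  have hMl : M.length ≠ 0 := by
    simp only [M, List.length_drop, List.length_take]; omega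
  have hsum : mSum (P : Multiset S) = mSum ((P ++ M : List S) : Multiset S) := by
    rw [hPM, hf i, hf j, hfij]
  refine ⟨(P : Multiset S) + R, M, ?_, ?_, ?_, ?_⟩
  · intro h
    rw [add_eq_zero] at h
    exact hne i h.1
  · intro h
    apply hMl
    have h2 := congrArg Multiset.card h
    simpa using h2
  · change _ = (l : Multiset S)
    conv_rhs => rw [hl]
    rw [← Multiset.coe_add, ← Multiset.coe_add]; abel
  · change _ = mSum (l : Multiset S)
    conv_rhs => rw [hl]
    rw [aux_mSum_add, hsum, ← aux_mSum_add, Multiset.coe_add]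

theorem aux_dav {S : Type} [AddCommSemigroup S] [Fintype S] (T : Multiset S)
    (hT : DavC S ≤ T.card) : Reducible T := by
  have : DavC S ∈ {ℓ : ℕ | ∀ T : Multiset S, ℓ ≤ Multiset.card T → Reducible T} := by
    apply Nat.sInf_mem
    refine ⟨Fintype.card S + 1, fun T hT => ?_⟩
    obtain ⟨A, C, hA, hC, rfl, h⟩ := aux_pigeon T hT
    refine ⟨A, ?_, Or.inl h⟩
    exact lt_add_of_pos_right A (pos_iff_ne_zero.2 hC)
  exact this T hT

theorem aux_period {S : Type} [AddCommSemigroup S] [Fintype S] (a : S) :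
    0 < period a ∧ ∃ k, rep a (k + period a) = rep a k := by
  have : period a ∈ {t : ℕ | 0 < t ∧ ∃ k : ℕ, rep a (k + t) = rep a k} := by
    apply Nat.sInf_mem
    obtain ⟨i, j, hij, h⟩ := Finite.exists_ne_map_eq_of_infinite (rep a)
    rcases lt_or_gt_of_ne hij with hlt | hlt
    · exact ⟨j - i, by omega, i, by rw [show i + (j - i) = j by omega, h]⟩
    · exact ⟨i - j, by omega, j, by rw [show j + (i - j) = i by omega, h]⟩
  exact this

theorem aux_exp_pos (S : Type) [AddCommSemigroup S] [Fintype S] : 0 < expS S := by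
  rw [pos_iff_ne_zero, expS, Ne, Finset.lcm_eq_zero_iff]
  rintro ⟨a, -, ha⟩
  exact (aux_period a).1.ne' ha

theorem aux_kappa_ge (S : Type) [AddCommSemigroup S] [Fintype S] : Fintype.card S ≤ kappa S := by
  have h := aux_exp_pos S
  rw [kappa]
  have h1 := Nat.div_add_mod (Fintype.card S + expS S - 1) (expS S)
  have h2 := Nat.mod_lt (Fintype.card S + expS S - 1) h
  rw [mul_comm] at h1
  omega

theorem aux_kappa_smul {S G : Type} [AddCommSemigroup S] [Fintype S] [AddCommGroup G] (ψ : S → G)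
    (hψ : ∀ a b, ψ (a + b) = ψ a + ψ b) (a : S) : kappa S • ψ a = 0 := by
  have h1 : period a • ψ a = 0 := by
    obtain ⟨_, k, hk⟩ := aux_period a
    have := congrArg ψ hk
    rw [aux_rep_hom ψ hψ, aux_rep_hom ψ hψ, show k + period a + 1 = period a + (k + 1) by ring,
      add_nsmul] at this
    simpa using this
  have h2 : period a ∣ kappa S :=
    (Finset.dvd_lcm (f := fun a => period a) (Finset.mem_univ a)).trans (Dvd.intro_left _ rfl)
  obtain ⟨c, hc⟩ := h2
  rw [hc, mul_comm, mul_nsmul', h1, smul_zero]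

theorem aux_group {S : Type} [AddCommSemigroup S] [Fintype S] (harch : IsArchimedean S)
    (e : S) (he : e + e = e) :
    ∃ (G : Type) (_ : AddCommGroup G) (_ : Fintype G) (ψ : S → G) (ι : G → S),
      (∀ a b, ψ (a + b) = ψ a + ψ b) ∧ (∀ a b, ι (a + b) = ι a + ι b) ∧
      (∀ g, ψ (ι g) = g) ∧ (∀ s, ι (ψ s) = e + s) := by
  classical
  have hrep : ∀ n, rep e n = e := by
    intro n
    induction n with
    | zero => rfl
    | succ n ih => rw [rep, ih, he]
  have hinv : ∀ g : {s : S // e + s = s}, ∃ x : {s : S // e + s = s}, x.1 + g.1 = e := by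
    rintro ⟨g, hg⟩
    obtain ⟨m, x, hx⟩ := (harch e g).1
    rw [hrep] at hx
    refine ⟨⟨e + x, by rw [← add_assoc, he]⟩, ?_⟩
    change e + x + g = e
    rw [add_assoc, add_comm x g, ← hx, he]
  choose inv hinv using hinv
  let iadd : Add {s : S // e + s = s} := ⟨fun a b => ⟨a.1 + b.1, by rw [← add_assoc, a.2]⟩⟩
  let izero : Zero {s : S // e + s = s} := ⟨⟨e, he⟩⟩
  let ineg : Neg {s : S // e + s = s} := ⟨inv⟩
  let inst : AddCommGroup {s : S // e + s = s} :=
    { add_assoc := fun a b c => Subtype.ext (add_assoc a.1 b.1 c.1)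
      zero_add := fun a => Subtype.ext a.2
      add_zero := fun a => Subtype.ext (show a.1 + e = a.1 by rw [add_comm]; exact a.2)
      add_comm := fun a b => Subtype.ext (add_comm a.1 b.1)
      neg_add_cancel := fun a => Subtype.ext (hinv a)
      nsmul := nsmulRec
      zsmul := zsmulRec }
  refine ⟨{s : S // e + s = s}, inst, inferInstance,
    fun s => ⟨e + s, by rw [← add_assoc, he]⟩, fun g => g.1, ?_, fun a b => rfl, ?_, fun s => rfl⟩
  · intro a b
    apply Subtype.ext
    change e + (a + b) = e + a + (e + b)
    rw [add_add_add_comm, he]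
  · rintro ⟨g, hg⟩
    exact Subtype.ext hg

theorem aux_nil {S Q : Type} [AddCommSemigroup S] [Fintype S]
    [AddCommSemigroup Q]
    (harch : IsArchimedean S) (e : S) (he : e + e = e)
    (π : S → Q) (hsurj : Function.Surjective π)
    (hhom : ∀ a b : S, π (a + b) = π a + π b)
    (hker : ∀ a b : S, π a = π b ↔ (a = b ∨ (e + a = a ∧ e + b = b)))
    (hidx : nilIndex Q ≤ 3) (a b c : S) : e + (a + b + c) = a + b + c := by
  have hee : ∀ n, mSum (Multiset.replicate (n + 1) (π e)) = ((π e : Q) : WithZero Q) := by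
    intro n
    rw [aux_rep]
    congr 1
    induction n with
    | zero => rfl
    | succ n ih => rw [rep, ih, ← hhom, he]
  -- sums of images
  have hmap : ∀ T : Multiset S, ∀ s : S, mSum T = (s : WithZero S) →
      mSum (T.map π) = (π s : WithZero Q) := by
    intro T
    induction T using Multiset.induction_on with
    | empty => intro s h; rw [aux_mSum_zero] at h; exact absurd h.symm WithZero.coe_ne_zero
    | cons a T ih =>
      intro s h
      rw [aux_mSum_cons] at h
      rw [Multiset.map_cons, aux_mSum_cons]
      by_cases hT : T = 0
      · subst hT
        rw [aux_mSum_zero, add_zero] at h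
        simp [WithZero.coe_inj.1 h, aux_mSum_zero]
      · obtain ⟨t, ht⟩ := aux_mSum_ne T hT
        rw [ht, ← WithZero.coe_add] at h
        rw [← WithZero.coe_inj.1 h, hhom, ih t ht, WithZero.coe_add]
  have hlong : ∀ T : Multiset S, Fintype.card S + 1 ≤ T.card → ∀ s : S,
      mSum T = (s : WithZero S) → e + s = s := by
    intro T hT s hs
    obtain ⟨A, C, hA, hC, rfl, h⟩ := aux_pigeon T hT
    obtain ⟨d, hd⟩ := aux_mSum_ne C hC
    rw [hs] at h
    rw [aux_mSum_add, h, hd, ← WithZero.coe_add] at hs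
    have hs := WithZero.coe_inj.1 hs
    have hr : ∀ n, s + rep d n = s := by
      intro n
      induction n with
      | zero => exact hs
      | succ n ih => rw [rep, ← add_assoc, ih, hs]
    obtain ⟨m, x, hx⟩ := (harch d e).1
    have h1 := hr m
    rw [hx] at h1
    rw [← h1, add_left_comm, ← add_assoc e e x, he]
  have hmem : nilIndex Q ∈ {t : ℕ | 0 < t ∧ ∃ a : Q, tFold Q t = {a}} := by
    apply Nat.sInf_mem
    refine ⟨Fintype.card S + 1, by omega, π e, ?_⟩
    ext q
    simp only [tFold, Set.mem_ofPred_eq, Set.mem_singleton_iff]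
    constructor
    · rintro ⟨T, hTc, hTs⟩
      obtain ⟨V, -, rfl⟩ : ∃ V ≤ T.map (Function.surjInv hsurj), V.map π = T :=
        ⟨_, le_rfl, by rw [Multiset.map_map]; simp [Function.surjInv_eq hsurj]⟩
      rw [Multiset.card_map] at hTc
      have hV0 : V ≠ 0 := by rintro rfl; simp at hTc
      obtain ⟨s, hs⟩ := aux_mSum_ne V hV0
      rw [hmap V s hs] at hTs
      rw [← WithZero.coe_inj.1 hTs, hker]
      exact Or.inr ⟨hlong V hTc.ge s hs, he⟩
    · rintro rfl
      exact ⟨_, Multiset.card_replicate _ _, hee _⟩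
  obtain ⟨hpos, q, hq⟩ := hmem
  have hqe : π e ∈ tFold Q (nilIndex Q) := by
    obtain ⟨n, hn⟩ := Nat.exists_eq_succ_of_ne_zero hpos.ne'
    rw [hn]
    exact ⟨_, Multiset.card_replicate _ _, hee _⟩
  have h3 : π (a + b + c) ∈ tFold Q (nilIndex Q) := by
    generalize nilIndex Q = t at *
    interval_cases t
    · exact ⟨{π (a + b + c)}, by simp, by simp [mSum]⟩
    · exact ⟨{π (a + b), π c}, by simp, by simp [mSum, hhom]⟩
    · exact ⟨{π a, π b, π c}, by simp, by simp [mSum, hhom, add_assoc]⟩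
  rw [hq, Set.mem_singleton_iff] at hqe h3
  rw [← hqe, hker] at h3
  rcases h3 with h3 | h3
  · rw [h3, he]
  · exact h3.1

theorem aux_main {S G : Type} [AddCommSemigroup S] [Fintype S] [AddCommGroup G] [Fintype G]
    (e : S) (huniq : ∀ f : S, f + f = f → f = e) (ψ : S → G) (ι : G → S)
    (hψ : ∀ a b, ψ (a + b) = ψ a + ψ b) (hι : ∀ a b, ι (a + b) = ι a + ι b)
    (hψι : ∀ g, ψ (ι g) = g) (hιψ : ∀ s, ι (ψ s) = e + s)
    (h3 : ∀ a b c : S, e + (a + b + c) = a + b + c)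
    (T : Multiset S) (hT : DavC S + kappa S ≤ T.card + 1) :
    ∃ B : Multiset S, B ≤ T ∧ Multiset.card T - Multiset.card B = kappa S ∧ EqSum B T := by
  classical
  have hιinj : Function.Injective ι := Function.LeftInverse.injective hψι
  have hGS : Fintype.card G ≤ Fintype.card S := Fintype.card_le_of_injective ι hιinj
  have hκ := aux_kappa_ge S
  have hG1 : 0 < Fintype.card G := Fintype.card_pos
  -- group facts on sums of lifted sequences
  have hιne : ∀ g, e + ι g = ι g := by intro g; rw [← hιψ, hψι]
  have hmι : ∀ U : Multiset G, U ≠ 0 → mSum (U.map ι) = ((ι U.sum : S) : WithZero S) := by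
    intro U hU
    obtain ⟨s, hs⟩ := aux_mSum_ne (U.map ι) (by simpa using hU)
    have h1 := aux_hom ψ hψ _ _ hs
    rw [Multiset.map_map] at h1
    have h2 : ψ s = U.sum := by rw [h1]; congr 1; simp [hψι]
    rw [hs]
    congr 1
    have hs' : e + s = s := by
      clear h1 h2
      induction U using Multiset.induction_on generalizing s with
      | empty => exact absurd rfl hU
      | cons g U ih =>
        rw [Multiset.map_cons, aux_mSum_cons] at hs
        by_cases hU0 : U = 0
        · subst hU0
          rw [Multiset.map_zero, aux_mSum_zero, add_zero] at hs
          rw [← WithZero.coe_inj.1 hs, hιne]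
        · obtain ⟨t, ht⟩ := aux_mSum_ne (U.map ι) (by simpa using hU0)
          rw [ht, ← WithZero.coe_add] at hs
          rw [← WithZero.coe_inj.1 hs, ← add_assoc, hιne]
    rw [← h2, hιψ, hs']
  have hD : ∀ U : Multiset G, DavC S ≤ U.card → ∃ V ≤ U, V ≠ 0 ∧ V.sum = 0 := by
    intro U hU
    obtain ⟨B, hB, hEq⟩ := aux_dav (U.map ι) (by simpa using hU)
    have hU0 : U ≠ 0 := by rintro rfl; exact absurd hB (by simp)
    obtain ⟨V, hV, rfl⟩ := aux_lift ι B U hB.le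
    have hVU : U - V + V = U := Multiset.sub_add_cancel hV
    by_cases hV0 : V = 0
    · subst hV0
      refine ⟨U, le_rfl, hU0, ?_⟩
      unfold EqSum at hEq
      rw [hmι U hU0, Multiset.map_zero, aux_mSum_zero] at hEq
      rcases hEq with h | ⟨f, hf, ⟨_, h⟩ | ⟨h, _⟩⟩
      · exact absurd h.symm WithZero.coe_ne_zero
      · have h' := WithZero.coe_inj.1 h
        have := hf (ι U.sum)
        rw [← h', ← hι] at this
        simpa using hιinj this
      · exact absurd h.symm WithZero.coe_ne_zero
    · refine ⟨U - V, Multiset.sub_le_self _ _, ?_, ?_⟩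
      · intro h0
        rw [h0, zero_add] at hVU
        rw [hVU] at hB
        exact lt_irrefl _ hB
      · unfold EqSum at hEq
        rw [hmι U hU0, hmι V hV0] at hEq
        have h : ι V.sum = ι U.sum := by
          rcases hEq with h | ⟨f, hf, ⟨h, _⟩ | ⟨_, h⟩⟩
          · exact WithZero.coe_inj.1 h
          · exact absurd h WithZero.coe_ne_zero
          · exact absurd h WithZero.coe_ne_zero
        have h := hιinj h
        rw [← hVU, Multiset.sum_add] at h
        simpa using h
  have hκG : ∀ g : G, kappa S • g = 0 := by
    intro g
    have := aux_kappa_smul ψ hψ (ι g)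
    rwa [hψι] at this
  have hDpos : 0 < DavC S := by
    by_contra h
    obtain ⟨V, hV, hV0, _⟩ := hD 0 (by omega)
    exact hV0 (Multiset.le_zero.1 hV)
  obtain ⟨U, hU, hUc, hUs⟩ := aux_gao (DavC S) (kappa S) (hGS.trans hκ) hκG hD (T.map ψ)
    (by simpa using hT)
  obtain ⟨Z, hZ, rfl⟩ := aux_lift ψ U T hU
  rw [Multiset.card_map] at hUc
  have hTZ : T - Z + Z = T := Multiset.sub_add_cancel hZ
  set B := T - Z with hBdef
  have hBT : B ≤ T := Multiset.sub_le_self _ _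
  have hcard : T.card = B.card + kappa S := by rw [← hUc, ← Multiset.card_add, hTZ]
  have hBsum : (B.map ψ).sum = (T.map ψ).sum := by
    rw [← hTZ, Multiset.map_add, Multiset.sum_add, hUs, add_zero]
  have hT0 : T ≠ 0 := by rintro rfl; simp at hcard; omega
  obtain ⟨t, ht⟩ := aux_mSum_ne T hT0
  have hψt := aux_hom ψ hψ T t ht
  -- the conclusion from kernel membership
  have fin : ∀ C ≤ T, C.card + kappa S = T.card → (C.map ψ).sum = (T.map ψ).sum →
      ∀ s : S, mSum C = (s : WithZero S) → e + s = s → e + t = t →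
      ∃ B : Multiset S, B ≤ T ∧ Multiset.card T - Multiset.card B = kappa S ∧ EqSum B T := by
    intro C hC hCc hCs s hs hes het
    refine ⟨C, hC, by omega, Or.inl ?_⟩
    rw [hs, ht, ← hes, ← het, ← hιψ, ← hιψ, hψt, aux_hom ψ hψ C s hs, hCs]
  by_cases hgrp : ∀ s : S, e + s = s
  · by_cases hB0 : B = 0
    · refine ⟨B, hBT, by omega, Or.inr ⟨e, hgrp, Or.inl ⟨by rw [hB0, aux_mSum_zero], ?_⟩⟩⟩
      have h0 : ψ t = 0 := by rw [hψt, ← hBsum, hB0]; simp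
      have h1 : e = ι 0 := by
        refine (huniq _ ?_).symm
        rw [← hι, add_zero]
      rw [ht, ← hgrp t, ← hιψ, h0, ← h1]
    · obtain ⟨s, hs⟩ := aux_mSum_ne B hB0
      exact fin B hBT hcard.symm hBsum s hs (hgrp s) (hgrp t)
  push Not at hgrp
  obtain ⟨a0, ha0⟩ := hgrp
  -- irreducible sequences are short
  have irr : ∀ A : Multiset S, (∀ C < A, C ≠ 0 → mSum C ≠ mSum A) → A ≠ 0 → A.card < DavC S := by
    intro A hA hA0
    by_contra hcon
    obtain ⟨C, hC, hEq⟩ := aux_dav A (by omega)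
    obtain ⟨s, hs⟩ := aux_mSum_ne A hA0
    rcases hEq with h | ⟨f, hf, _⟩
    · by_cases hC0 : C = 0
      · rw [hC0, aux_mSum_zero, hs] at h
        exact absurd h.symm WithZero.coe_ne_zero
      · exact hA C hC hC0 h
    · have := huniq f (hf f)
      subst this
      exact ha0 (hf a0)
  have irrrep : ∀ (a : S) (n : ℕ), (∀ m < n, rep a m ≠ rep a n) → n + 1 < DavC S := by
    intro a n h
    have := irr (Multiset.replicate (n + 1) a) (by
      intro C hC hC0 hEq
      obtain ⟨m, hm, rfl⟩ := Multiset.le_replicate_iff.1 hC.le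
      have hlt := Multiset.card_lt_card hC
      simp only [Multiset.card_replicate] at hlt
      obtain ⟨k, rfl⟩ : ∃ k, m = k + 1 := by
        refine Nat.exists_eq_succ_of_ne_zero ?_
        rintro rfl
        exact hC0 (by simp)
      rw [aux_rep, aux_rep] at hEq
      exact h k (by omega) (WithZero.coe_inj.1 hEq)) (by simp)
    simpa using this
  have hK : ∀ s u : S, e + s = s → e + (s + u) = s + u := by
    intro s u h; rw [← add_assoc, h]
  have big : ∀ A : Multiset S, 3 ≤ A.card → ∀ s : S, mSum A = (s : WithZero S) → e + s = s := by
    intro A hA s hs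
    obtain ⟨x, y, z, W, rfl⟩ : ∃ x y z, ∃ W : Multiset S, A = {x, y, z} + W := by
      obtain ⟨l, rfl⟩ := Quot.exists_rep A
      change 3 ≤ l.length at hA
      rcases l with _ | ⟨x, _ | ⟨y, _ | ⟨z, W⟩⟩⟩
      · simp at hA
      · simp at hA
      · simp at hA
      · exact ⟨x, y, z, (W : Multiset S), rfl⟩
    have hxyz : mSum ({x, y, z} : Multiset S) = ((x + y + z : S) : WithZero S) := by
      simp [mSum, add_assoc]
    rw [aux_mSum_add, hxyz] at hs
    by_cases hW : W = 0
    · subst hW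
      rw [aux_mSum_zero, add_zero] at hs
      rw [← WithZero.coe_inj.1 hs, h3]
    · obtain ⟨w, hw⟩ := aux_mSum_ne W hW
      rw [hw, ← WithZero.coe_add] at hs
      rw [← WithZero.coe_inj.1 hs]
      exact hK _ _ (h3 x y z)
  have pair : ∀ (p q : S) (C : Multiset S), C ≤ {p, q} → C = 0 ∨ C = {p} ∨ C = {q} ∨ C = {p, q} := by
    intro p q C hC
    have := Multiset.mem_powerset.2 hC
    simp only [Multiset.insert_eq_cons, Multiset.powerset_cons] at this
    rw [← Multiset.cons_zero q, Multiset.powerset_cons] at this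
    simp at this
    simp only [Multiset.insert_eq_cons]
    tauto
  have ms1 : ∀ p : S, mSum ({p} : Multiset S) = (p : WithZero S) := by intro p; simp [mSum]
  have ms2 : ∀ p q : S, mSum ({p, q} : Multiset S) = ((p + q : S) : WithZero S) := by
    intro p q; simp [mSum]
  have hD3 : 2 < DavC S := by
    by_cases h2 : ∀ a b : S, e + (a + b) = a + b
    · apply irrrep a0 1
      intro m hm h
      interval_cases m
      change a0 = a0 + a0 at h
      apply ha0
      rw [h, h2]
    · push Not at h2
      obtain ⟨a, b, hab⟩ := h2
      have key : ∀ x y : S, e + (x + y) ≠ x + y → x ≠ x + y := by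
        intro x y hxy h
        apply hxy
        rw [h]; exact h3 x y y
      have := irr {a, b} (by
        intro C hC hC0 hEq
        rw [ms2] at hEq
        rcases pair a b C hC.le with rfl | rfl | rfl | rfl
        · exact hC0 rfl
        · rw [ms1] at hEq
          exact key a b hab (WithZero.coe_inj.1 hEq)
        · rw [ms1] at hEq
          rw [add_comm a b] at hab hEq
          exact key b a hab (WithZero.coe_inj.1 hEq)
        · exact lt_irrefl _ hC) (by simp)
      simpa using this
  have het : e + t = t := big T (by omega) t ht
  have hB0 : B ≠ 0 := by
    intro h
    have : B.card = 0 := by rw [h]; rfl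
    omega
  obtain ⟨s, hs⟩ := aux_mSum_ne B hB0
  by_cases hes : e + s = s
  · exact fin B hBT hcard.symm hBsum s hs hes het
  have hB2 : B.card = 2 := by
    by_contra hne
    exact hes (big B (by omega) s hs)
  have hDle : DavC S ≤ 3 := by omega
  obtain ⟨x, y, hxyB⟩ := Multiset.card_eq_two.1 hB2
  rw [hxyB, ms2] at hs
  have hsxy := WithZero.coe_inj.1 hs
  subst hsxy
  have hsq : ∀ z : S, e + (z + z) = z + z := by
    intro z
    by_contra hz
    have : 2 + 1 < DavC S := by
      apply irrrep z 2
      intro m hm h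
      interval_cases m
      · change z = z + z + z at h
        apply hz
        have hz1 : e + z = z := by
          rw [h]; exact h3 z z z
        exact hK _ _ hz1
      · change z + z = z + z + z at h
        apply hz
        rw [h]; exact h3 z z z
    omega
  have hψ0 : ∀ x y : S, e + (x + y) ≠ x + y → ψ x = 0 := by
    intro x y hxy
    by_contra hx0
    have hlt := irr {x, y, y} (by
      intro C hC hC0 hEq
      have htot : mSum ({x, y, y} : Multiset S) = ((x + y + y : S) : WithZero S) := by
        simp [mSum, add_assoc]
      rw [htot] at hEq
      have hxK : x ≠ x + y + y := by
        intro h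
        have h1 : e + x = x := by
          rw [h]; exact h3 x y y
        exact hxy (hK _ _ h1)
      have hyK : y ≠ x + y + y := by
        intro h
        have h1 : e + y = y := by
          rw [h]; exact h3 x y y
        apply hxy
        rw [add_comm x y]
        exact hK _ _ h1
      have hxyK : x + y ≠ x + y + y := by
        intro h; apply hxy; rw [h]; exact h3 x y y
      have hyy : y + y ≠ x + y + y := by
        intro h
        have := congrArg ψ h
        rw [hψ, hψ, hψ, add_assoc] at this
        exact hx0 (by simpa using this)
      obtain ⟨z, hz⟩ := Multiset.lt_iff_cons_le.1 hC
      have hzm : z = x ∨ z = y := by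
        have := Multiset.mem_of_le hz (Multiset.mem_cons_self z C)
        simpa using this
      have hcase : C ≤ {y, y} ∨ C ≤ {x, y} := by
        rcases hzm with rfl | rfl
        · left
          exact (Multiset.cons_le_cons_iff z).1 hz
        · right
          have h' : ({x, z, z} : Multiset S) = z ::ₘ {x, z} := Multiset.cons_swap x z {z}
          rw [h'] at hz
          exact (Multiset.cons_le_cons_iff z).1 hz
      have h1 : C = 0 ∨ C = {x} ∨ C = {y} ∨ C = {x, y} ∨ C = {y, y} := by
        rcases hcase with h | h
        · have := pair _ _ _ h; tauto
        · have := pair _ _ _ h; tauto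
      rcases h1 with rfl | rfl | rfl | rfl | rfl
      · exact hC0 rfl
      · rw [ms1] at hEq; exact hxK (WithZero.coe_inj.1 hEq)
      · rw [ms1] at hEq; exact hyK (WithZero.coe_inj.1 hEq)
      · rw [ms2] at hEq; exact hxyK (WithZero.coe_inj.1 hEq)
      · rw [ms2] at hEq; exact hyy (WithZero.coe_inj.1 hEq)) (by simp)
    simp at hlt
    omega
  have hx0 := hψ0 x y hes
  have hy0 := hψ0 y x (by rwa [add_comm y x])
  have h2g : ∀ g : G, g + g = 0 := by
    intro g
    by_contra hg
    have hpos := addOrderOf_pos g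
    have hord := addOrderOf_nsmul_eq_zero g
    obtain ⟨n, hn⟩ := Nat.exists_eq_succ_of_ne_zero hpos.ne'
    have h2n : 2 ≤ n := by
      by_contra hlt
      have : n < 2 := by omega
      rw [hn] at hord
      interval_cases n
      · apply hg; simp at hord; simp [hord]
      · apply hg; simpa [two_nsmul] using hord
    have := irrrep (ι g) n (by
      intro m hm h
      have h' := congrArg ψ h
      rw [aux_rep_hom ψ hψ, aux_rep_hom ψ hψ, hψι] at h'
      rw [hn] at hord
      rw [show n + 1 = n.succ from rfl, hord] at h'
      have := addOrderOf_le_of_nsmul_eq_zero (by omega) h'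
      omega)
    omega
  have hnd : ¬ T.Nodup := by
    intro h
    have := Finset.card_le_univ (⟨T, h⟩ : Finset S)
    change T.card ≤ _ at this
    omega
  obtain ⟨z, hz⟩ : ∃ z, ({z, z} : Multiset S) ≤ T := by
    rw [Multiset.nodup_iff_le] at hnd
    push Not at hnd
    exact hnd
  refine fin {z, z} hz (by simp; omega) ?_ (z + z) (ms2 z z) (hsq z) het
  rw [← hBsum, hxyB]
  simp [hx0, hy0, h2g]

end aux

/-- Let `S` be a finite archimedean commutative semigroup with unique
idempotent `e` and kernel `K = e + S`, and present the Rees quotient nilsemigroup `S/K` as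
a finite commutative semigroup `Q` with a surjective additive map `π : S → Q` whose kernel
congruence is the Rees congruence of `K`.  If the nilsemigroup `S/K` has nilpotency index
at most three, then `E(S) ≤ D(S) + κ(S) − 1`. -/
theorem E_le_of_archimedean_nilIndex_le_three (S Q : Type) [AddCommSemigroup S] [Fintype S]
    [AddCommSemigroup Q] [Fintype Q]
    (harch : IsArchimedean S)
    (e : S) (he : e + e = e) (huniq : ∀ f : S, f + f = f → f = e)
    (K : Set S) (hK : K = {s : S | ∃ x : S, s = e + x})
    (π : S → Q) (hsurj : Function.Surjective π)
    (hhom : ∀ a b : S, π (a + b) = π a + π b)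
    (hker : ∀ a b : S, π a = π b ↔ (a = b ∨ (a ∈ K ∧ b ∈ K)))
    (hidx : nilIndex Q ≤ 3) :
    EGZ.EC S ≤ EGZ.DavC S + EGZ.kappa S - 1 := by
  subst hK
  have hKe : ∀ s : S, s ∈ {s : S | ∃ x : S, s = e + x} ↔ e + s = s := by
    intro s
    constructor
    · rintro ⟨x, rfl⟩
      rw [← add_assoc, he]
    · intro h
      exact ⟨s, h.symm⟩
  obtain ⟨G, _, _, ψ, ι, hψ, hι, hψι, hιψ⟩ := aux_group harch e he
  have h3 := aux_nil harch e he π hsurj hhom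
    (by intro a b; rw [hker, hKe, hKe]) hidx
  have hκ := aux_kappa_ge S
  have hS : 0 < Fintype.card S := Fintype.card_pos_iff.2 ⟨e⟩
  have hmain := aux_main e huniq ψ ι hψ hι hψι hιψ h3
  have hD : 0 < EGZ.DavC S := by
    rw [Nat.pos_iff_ne_zero]
    intro h0
    obtain ⟨B, hB, _⟩ := aux_dav (0 : Multiset S) (by omega)
    exact absurd hB (by simp)
  apply Nat.sInf_le
  refine ⟨by omega, fun T hT => hmain T (by omega)⟩
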